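/- Let X and Y be Hilbert spaces, let A : D(A) ⊆ Y → X be a densely defined closed linear operator whose adjoint A* : D(A*) ⊆ X → Y is densely defined, and let L : X → X be a bounded self-adjoint operator. Assume that X decomposes as a direct sum of closed subspaces X = X₋ ⊕ ker L ⊕ X₊ with dim X₋ < ∞ and dim ker L < ∞, such that (Lu, u) < 0 for all u ∈ X₋ ∖ {0}, and such that there exists δ > 0 with (Lu, u) ≥ δ‖u‖² for all u ∈ X₊. Then the operator B := A* L A, with domain D(B) = {y ∈ D(A) : L(Ay) ∈ D(A*)} ⊆ D(A), is self-adjoint on Y. -/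

import Mathlib

open scoped RealInnerProductSpace

/-!
On the graph of `A`, the form `⟪L A y, A z⟫ + c ⟪y, z⟫` is coercive for large `c`. Indeed, `L` is
coercive on a closed subspace `P` of finite codimension, hence coercive on the whole space up to a
multiple of `‖Q x‖ ^ 2`, where `Q` is the projection onto the finite-dimensional space `Pᗮ`. Since
`D(A*)` is dense, `Q` can be approximated in norm by finite-rank operators whose adjoints map into
`D(A*)`, so `‖Q A y‖ ^ 2` is at most a small multiple of `‖A y‖ ^ 2` plus a multiple of `‖y‖ ^ 2`.
By the Lax-Milgram theorem on the graph, which is complete because `A` is closed, the symmetric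
operator `A* L A + c` is surjective, and a symmetric operator with a surjective real shift is
self-adjoint.
-/

section

open RCLike
open LinearPMap (adjoint_apply_eq adjoint_isFormalAdjoint eq_of_le_of_domain_eq
  mem_adjoint_domain_of_exists)
open scoped InnerProductSpace

variable {𝕜 X Y : Type*} [RCLike 𝕜] [NormedAddCommGroup X] [InnerProductSpace 𝕜 X]
  [NormedAddCommGroup Y] [InnerProductSpace 𝕜 Y]

section Symmetric

variable {B : Y →ₗ.[𝕜] Y} {c : ℝ}

theorem inner_apply_add_smul_left_eq_right (hB : B.IsFormalAdjoint B) (u w : B.domain) :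
    ⟪B u + (c : 𝕜) • (u : Y), (w : Y)⟫_𝕜 = ⟪(u : Y), B w + (c : 𝕜) • (w : Y)⟫_𝕜 := by
  simp only [inner_add_left, inner_add_right, inner_smul_left, inner_smul_right, conj_ofReal,
    hB u w]

variable [CompleteSpace Y]

theorem dense_domain_of_surjective_add_smul (hB : B.IsFormalAdjoint B)
    (hsurj : ∀ f : Y, ∃ y : B.domain, B y + (c : 𝕜) • (y : Y) = f) :
    Dense (B.domain : Set Y) := by
  rw [Submodule.dense_iff_topologicalClosure_eq_top, Submodule.topologicalClosure_eq_top_iff,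
    Submodule.eq_bot_iff]
  intro f hf
  obtain ⟨y, rfl⟩ := hsurj f
  have hy : (y : Y) = 0 := ext_inner_right 𝕜 fun g ↦ by
    obtain ⟨w, rfl⟩ := hsurj g
    rw [← inner_apply_add_smul_left_eq_right hB, inner_zero_left]
    exact (Submodule.mem_orthogonal' _ _).1 hf w w.2
  obtain rfl : y = 0 := Subtype.ext hy
  simp

theorem adjoint_eq_self_of_surjective_add_smul (hB : B.IsFormalAdjoint B)
    (hsurj : ∀ f : Y, ∃ y : B.domain, B y + (c : 𝕜) • (y : Y) = f) :
    B.adjoint = B := by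
  have hdense := dense_domain_of_surjective_add_smul hB hsurj
  have hle : B ≤ B.adjoint := hB.le_adjoint hdense
  refine (eq_of_le_of_domain_eq hle (le_antisymm hle.1 fun v hv ↦ ?_)).symm
  obtain ⟨u, hu⟩ := hsurj (B.adjoint ⟨v, hv⟩ + (c : 𝕜) • v)
  have hvu : v = u := ext_inner_right 𝕜 fun g ↦ by
    obtain ⟨w, rfl⟩ := hsurj g
    rw [← inner_apply_add_smul_left_eq_right hB, hu]
    simp only [inner_add_left, inner_add_right, inner_smul_left, inner_smul_right, conj_ofReal,
      adjoint_isFormalAdjoint hdense ⟨v, hv⟩ w]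
  exact hvu ▸ u.2

end Symmetric

section LaxMilgram

variable {V : Type*} [NormedAddCommGroup V] [InnerProductSpace 𝕜 V] [CompleteSpace V]

theorem surjective_of_coercive {T : V →L[𝕜] V} {κ : ℝ} (hκ : 0 < κ)
    (hT : ∀ v, κ * ‖v‖ ^ 2 ≤ re ⟪T v, v⟫_𝕜) : Function.Surjective T := by
  have hunit : IsUnit T := T.isUnit_of_forall_le_norm_inner_map (c := ⟨κ, hκ.le⟩) hκ fun v ↦
    (mul_comm (‖v‖ ^ 2) κ).trans_le ((hT v).trans (re_le_norm _))
  exact (ContinuousLinearMap.isUnit_iff_bijective.1 hunit).surjective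

theorem exists_inner_add_mul_inner_eq_of_coercive [CompleteSpace X] [CompleteSpace Y]
    (L : X →L[𝕜] X) (R : V →L[𝕜] X) (J : V →L[𝕜] Y) {c κ : ℝ} (hκ : 0 < κ)
    (hcoer : ∀ u, κ * ‖u‖ ^ 2 ≤ re ⟪L (R u), R u⟫_𝕜 + c * ‖J u‖ ^ 2) (f : Y) :
    ∃ u, ∀ v, ⟪L (R u), R v⟫_𝕜 + c * ⟪J u, J v⟫_𝕜 = ⟪f, J v⟫_𝕜 := by
  let T : V →L[𝕜] V := R.adjoint ∘L L ∘L R + (c : 𝕜) • J.adjoint ∘L J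
  have hT (u v : V) : ⟪T u, v⟫_𝕜 = ⟪L (R u), R v⟫_𝕜 + c * ⟪J u, J v⟫_𝕜 := by
    simp only [T, add_apply, smul_apply, ContinuousLinearMap.comp_apply, inner_add_left,
      inner_smul_left, conj_ofReal, ContinuousLinearMap.adjoint_inner_left]
  have hTcoer (u : V) : κ * ‖u‖ ^ 2 ≤ re ⟪T u, u⟫_𝕜 := by
    rw [hT, map_add, re_ofReal_mul, inner_self_eq_norm_sq]
    exact hcoer u
  obtain ⟨u, hu⟩ := surjective_of_coercive hκ hTcoer (J.adjoint f)
  exact ⟨u, fun v ↦ by rw [← hT, hu, ContinuousLinearMap.adjoint_inner_left]⟩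

end LaxMilgram

section GraphSpace

/-- The graph of `A` as a subspace of the Hilbert sum `Y ⊕ X`, so that it carries the graph inner
product `⟪y, z⟫ + ⟪A y, A z⟫`. -/
def graphSpace (A : Y →ₗ.[𝕜] X) : Submodule 𝕜 (WithLp 2 (Y × X)) :=
  A.graph.comap (WithLp.linearEquiv 2 𝕜 (Y × X)).toLinearMap

variable {A : Y →ₗ.[𝕜] X}

theorem isClosed_graphSpace (hA : A.IsClosed) : IsClosed (graphSpace A : Set (WithLp 2 (Y × X))) :=
  hA.preimage (WithLp.prod_continuous_ofLp 2 Y X)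

theorem toLp_mem_graphSpace (y : A.domain) : WithLp.toLp 2 ((y : Y), A y) ∈ graphSpace A :=
  A.mem_graph y

theorem exists_eq_toLp_of_mem_graphSpace {u : WithLp 2 (Y × X)} (hu : u ∈ graphSpace A) :
    ∃ y : A.domain, u = WithLp.toLp 2 ((y : Y), A y) := by
  obtain ⟨y, hy, hAy⟩ := A.mem_graph_iff.1 hu
  exact ⟨y, WithLp.ofLp_injective 2 (Prod.ext hy.symm hAy.symm)⟩

variable [CompleteSpace X] [CompleteSpace Y]

theorem dense_adjoint_domain (hA : A.IsClosed) : Dense (A.adjoint.domain : Set X) := by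
  rw [Submodule.dense_iff_topologicalClosure_eq_top, Submodule.topologicalClosure_eq_top_iff,
    Submodule.eq_bot_iff]
  intro q hq
  have hmem : WithLp.toLp 2 ((0 : Y), q) ∈ (graphSpace A)ᗮᗮ := by
    rw [Submodule.mem_orthogonal]
    intro u hu
    have hu₂ : u.snd ∈ A.adjoint.domain :=
      mem_adjoint_domain_of_exists _ ⟨-u.fst, fun z ↦ by
        have h : ⟪u.fst, (z : Y)⟫_𝕜 + ⟪u.snd, A z⟫_𝕜 = 0 :=
          Submodule.inner_left_of_mem_orthogonal (toLp_mem_graphSpace z) hu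
        rw [inner_neg_left, neg_eq_of_add_eq_zero_right h]⟩
    simpa [WithLp.prod_inner_apply] using Submodule.inner_right_of_mem_orthogonal hu₂ hq
  rw [Submodule.orthogonal_orthogonal_eq_closure,
    (isClosed_graphSpace hA).submodule_topologicalClosure_eq] at hmem
  exact A.graph_fst_eq_zero_snd hmem rfl

theorem exists_graph_inner_add_mul_inner_eq_of_coercive (hA : A.IsClosed) (L : X →L[𝕜] X)
    {c κ : ℝ} (hκ : 0 < κ)
    (hcoer : ∀ y : A.domain,
      κ * (‖(y : Y)‖ ^ 2 + ‖A y‖ ^ 2) ≤ re ⟪L (A y), A y⟫_𝕜 + c * ‖(y : Y)‖ ^ 2) (f : Y) :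
    ∃ y : A.domain, ∀ z : A.domain,
      ⟪L (A y), A z⟫_𝕜 + c * ⟪(y : Y), (z : Y)⟫_𝕜 = ⟪f, (z : Y)⟫_𝕜 := by
  have := (isClosed_graphSpace hA).completeSpace_coe
  obtain ⟨⟨_, hu⟩, hsol⟩ := exists_inner_add_mul_inner_eq_of_coercive (c := c) L
    ((WithLp.sndL 2 𝕜 Y X).comp (graphSpace A).subtypeL)
    ((WithLp.fstL 2 𝕜 Y X).comp (graphSpace A).subtypeL) hκ (fun ⟨_, hu⟩ ↦ by
      obtain ⟨y, rfl⟩ := exists_eq_toLp_of_mem_graphSpace hu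
      rw [Submodule.coe_norm, WithLp.prod_norm_sq_eq_of_L2]
      exact hcoer y) f
  obtain ⟨y, rfl⟩ := exists_eq_toLp_of_mem_graphSpace hu
  exact ⟨y, fun z ↦ hsol ⟨_, toLp_mem_graphSpace z⟩⟩

end GraphSpace

section FiniteRank

variable [CompleteSpace Y] {A : Y →ₗ.[𝕜] X} (hA : Dense (A.domain : Set Y))
  (hA' : Dense (A.adjoint.domain : Set X))

include hA hA'

theorem exists_norm_inner_apply_le (q : X) {ε : ℝ} (hε : 0 < ε) :
    ∃ C : ℝ, ∀ y : A.domain, ‖⟪q, A y⟫_𝕜‖ ≤ ε * ‖A y‖ + C * ‖(y : Y)‖ := by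
  obtain ⟨e, he, hqe⟩ := hA'.exists_dist_lt q hε
  refine ⟨‖A.adjoint ⟨e, he⟩‖, fun y ↦ ?_⟩
  calc ‖⟪q, A y⟫_𝕜‖ = ‖⟪q - e, A y⟫_𝕜 + ⟪A.adjoint ⟨e, he⟩, (y : Y)⟫_𝕜‖ := by
        rw [adjoint_isFormalAdjoint hA ⟨e, he⟩ y, inner_sub_left, sub_add_cancel]
    _ ≤ ‖q - e‖ * ‖A y‖ + ‖A.adjoint ⟨e, he⟩‖ * ‖(y : Y)‖ :=
        norm_add_le_of_le (norm_inner_le_norm _ _) (norm_inner_le_norm _ _)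
    _ ≤ ε * ‖A y‖ + ‖A.adjoint ⟨e, he⟩‖ * ‖(y : Y)‖ := by
        rw [dist_eq_norm] at hqe
        gcongr

variable [CompleteSpace X] {N : Type*} [NormedAddCommGroup N] [InnerProductSpace 𝕜 N]
  [FiniteDimensional 𝕜 N] (Q : X →L[𝕜] N)

theorem exists_norm_apply_le_of_finiteDimensional {ε : ℝ} (hε : 0 < ε) :
    ∃ C : ℝ, ∀ y : A.domain, ‖Q (A y)‖ ≤ ε * ‖A y‖ + C * ‖(y : Y)‖ := by
  have := FiniteDimensional.complete 𝕜 N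
  let b := stdOrthonormalBasis 𝕜 N
  obtain ⟨η, hη, hηε⟩ := exists_pos_mul_lt hε (Module.finrank 𝕜 N)
  choose C hC using fun i ↦ exists_norm_inner_apply_le hA hA' (Q.adjoint (b i)) hη
  refine ⟨∑ i, C i, fun y ↦ ?_⟩
  calc ‖Q (A y)‖ = ‖∑ i, ⟪b i, Q (A y)⟫_𝕜 • b i‖ := by rw [b.sum_repr']
    _ ≤ ∑ i, ‖⟪Q.adjoint (b i), A y⟫_𝕜‖ := norm_sum_le_of_le _ fun i _ ↦ by
        rw [norm_smul, b.norm_eq_one, mul_one, ContinuousLinearMap.adjoint_inner_left]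
    _ ≤ ∑ i, (η * ‖A y‖ + C i * ‖(y : Y)‖) := Finset.sum_le_sum fun i _ ↦ hC i y
    _ = Module.finrank 𝕜 N * η * ‖A y‖ + (∑ i, C i) * ‖(y : Y)‖ := by
        rw [Finset.sum_add_distrib, Finset.sum_const, Finset.card_univ, Fintype.card_fin,
          nsmul_eq_mul, Finset.sum_mul, mul_assoc]
    _ ≤ ε * ‖A y‖ + (∑ i, C i) * ‖(y : Y)‖ := by gcongr

theorem exists_norm_sq_apply_le_of_finiteDimensional {ε : ℝ} (hε : 0 < ε) :
    ∃ C : ℝ, ∀ y : A.domain, ‖Q (A y)‖ ^ 2 ≤ ε * ‖A y‖ ^ 2 + C * ‖(y : Y)‖ ^ 2 := by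
  obtain ⟨C, hC⟩ := exists_norm_apply_le_of_finiteDimensional hA hA' Q
    (show 0 < √(ε / 2) by positivity)
  refine ⟨2 * C ^ 2, fun y ↦ ?_⟩
  calc ‖Q (A y)‖ ^ 2 ≤ (√(ε / 2) * ‖A y‖ + C * ‖(y : Y)‖) ^ 2 := by gcongr; exact hC y
    _ ≤ 2 * ((√(ε / 2) * ‖A y‖) ^ 2 + (C * ‖(y : Y)‖) ^ 2) := add_sq_le
    _ = ε * ‖A y‖ ^ 2 + 2 * C ^ 2 * ‖(y : Y)‖ ^ 2 := by
        rw [mul_pow, mul_pow, Real.sq_sqrt (by positivity)]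
        ring

end FiniteRank

section Coercive

variable (L : X →L[𝕜] X) {P : Submodule 𝕜 X} {δ : ℝ}

theorem le_re_inner_of_mem_topologicalClosure
    (hpos : ∀ u ∈ P, δ * ‖u‖ ^ 2 ≤ re ⟪L u, u⟫_𝕜) :
    ∀ u ∈ P.topologicalClosure, δ * ‖u‖ ^ 2 ≤ re ⟪L u, u⟫_𝕜 :=
  closure_minimal (t := {u | δ * ‖u‖ ^ 2 ≤ re ⟪L u, u⟫_𝕜}) hpos
    (isClosed_le (by fun_prop) (by fun_prop))

theorem exists_le_re_inner_add_mul_norm_sq [P.HasOrthogonalProjection] (hδ : 0 < δ)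
    (hpos : ∀ u ∈ P, δ * ‖u‖ ^ 2 ≤ re ⟪L u, u⟫_𝕜) :
    ∃ c : ℝ, 0 ≤ c ∧ ∀ x : X,
      δ / 2 * ‖x‖ ^ 2 ≤ re ⟪L x, x⟫_𝕜 + c * ‖Pᗮ.orthogonalProjectionOnto x‖ ^ 2 := by
  refine ⟨δ / 2 + ‖L‖ + (δ / 2)⁻¹ * ‖L‖ ^ 2, by positivity, fun x ↦ ?_⟩
  let p : X := P.starProjection x
  let n : X := Pᗮ.starProjection x
  have hx : x = p + n := (P.starProjection_add_starProjection_orthogonal x).symm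
  have hnorm : ‖x‖ ^ 2 = ‖p‖ ^ 2 + ‖n‖ ^ 2 := P.norm_sq_eq_add_norm_sq_starProjection x
  have hn : ‖Pᗮ.orthogonalProjectionOnto x‖ = ‖n‖ := rfl
  have hexp : re ⟪L x, x⟫_𝕜
      = re ⟪L p, p⟫_𝕜 + re ⟪L p, n⟫_𝕜 + re ⟪L n, p⟫_𝕜 + re ⟪L n, n⟫_𝕜 := by
    rw [hx, map_add, inner_add_left, inner_add_right, inner_add_right]
    simp only [map_add]
    ring
  have hbound (u v : X) : -(‖L‖ * ‖u‖ * ‖v‖) ≤ re ⟪L u, v⟫_𝕜 :=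
    neg_le_of_abs_le <| (abs_re_le_norm _).trans <| (norm_inner_le_norm _ _).trans <| by
      gcongr
      exact L.le_opNorm u
  have hyoung : 2 * ‖p‖ * (‖L‖ * ‖n‖) ≤ δ / 2 * ‖p‖ ^ 2 + (δ / 2)⁻¹ * (‖L‖ * ‖n‖) ^ 2 :=
    two_mul_le_add_mul_sq (by positivity)
  have hp : δ * ‖p‖ ^ 2 ≤ re ⟪L p, p⟫_𝕜 := hpos p (P.starProjection_apply_mem x)
  rw [hn, hexp, hnorm]
  linarith [hbound p n, hbound n p, hbound n n]

theorem exists_coercive_add_mul_norm_sq [CompleteSpace X] [CompleteSpace Y] {A : Y →ₗ.[𝕜] X}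
    (hA : Dense (A.domain : Set Y)) (hA' : Dense (A.adjoint.domain : Set X)) (hP : P.CoFG)
    (hδ : 0 < δ) (hpos : ∀ u ∈ P, δ * ‖u‖ ^ 2 ≤ re ⟪L u, u⟫_𝕜) :
    ∃ κ > 0, ∃ c : ℝ, ∀ y : A.domain,
      κ * (‖(y : Y)‖ ^ 2 + ‖A y‖ ^ 2) ≤ re ⟪L (A y), A y⟫_𝕜 + c * ‖(y : Y)‖ ^ 2 := by
  let K : Submodule 𝕜 X := P.topologicalClosure
  have : FiniteDimensional 𝕜 Kᗮ :=
    Module.Finite.iff_fg.2 <|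
      Submodule.CoFG.fg_of_disjoint K.orthogonal_disjoint.symm inferInstance
  obtain ⟨c, hc, hL⟩ := exists_le_re_inner_add_mul_norm_sq L (P := K) hδ
    (le_re_inner_of_mem_topologicalClosure L hpos)
  obtain ⟨ε, hε, hcε⟩ := exists_pos_mul_lt (show 0 < δ / 4 by positivity) c
  obtain ⟨C, hC⟩ :=
    exists_norm_sq_apply_le_of_finiteDimensional hA hA' Kᗮ.orthogonalProjectionOnto hε
  refine ⟨δ / 4, by positivity, c * C + δ / 4, fun y ↦ ?_⟩
  have hproj : c * ‖Kᗮ.orthogonalProjectionOnto (A y)‖ ^ 2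
      ≤ δ / 4 * ‖A y‖ ^ 2 + c * C * ‖(y : Y)‖ ^ 2 :=
    calc c * ‖Kᗮ.orthogonalProjectionOnto (A y)‖ ^ 2
        ≤ c * (ε * ‖A y‖ ^ 2 + C * ‖(y : Y)‖ ^ 2) := by gcongr; exact hC y
      _ = c * ε * ‖A y‖ ^ 2 + c * C * ‖(y : Y)‖ ^ 2 := by ring
      _ ≤ δ / 4 * ‖A y‖ ^ 2 + c * C * ‖(y : Y)‖ ^ 2 := by gcongr
  linarith [hL (A y)]

end Coercive

section AdjointConj

variable [CompleteSpace Y]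

/-- `B` is the operator `A* L A` on its natural domain `{y ∈ D(A) : L (A y) ∈ D(A*)}`. It is a
predicate on `B` because Mathlib composes partially defined operators only when the range of the
inner one lies in the domain of the outer one. -/
structure IsAdjointConj (A : Y →ₗ.[𝕜] X) (L : X →L[𝕜] X) (B : Y →ₗ.[𝕜] Y) : Prop where
  mem_domain_iff (y : Y) :
    y ∈ B.domain ↔ ∃ hy : y ∈ A.domain, L (A ⟨y, hy⟩) ∈ A.adjoint.domain
  apply_eq (y : B.domain) (hy : (y : Y) ∈ A.domain)
    (hLy : L (A ⟨(y : Y), hy⟩) ∈ A.adjoint.domain) :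
    B y = A.adjoint ⟨L (A ⟨(y : Y), hy⟩), hLy⟩

namespace IsAdjointConj

variable {A : Y →ₗ.[𝕜] X} {L : X →L[𝕜] X} {B : Y →ₗ.[𝕜] Y}

theorem domain_le (hB : IsAdjointConj A L B) : B.domain ≤ A.domain :=
  fun y hy ↦ ((hB.mem_domain_iff y).1 hy).1

theorem inner_apply (hB : IsAdjointConj A L B) (hA : Dense (A.domain : Set Y)) (u : B.domain)
    (z : A.domain) : ⟪B u, (z : Y)⟫_𝕜 = ⟪L (A ⟨u, hB.domain_le u.2⟩), A z⟫_𝕜 := by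
  obtain ⟨hu, hLu⟩ := (hB.mem_domain_iff u).1 u.2
  rw [hB.apply_eq u hu hLu]
  exact adjoint_isFormalAdjoint hA ⟨_, hLu⟩ z

theorem isFormalAdjoint_self (hB : IsAdjointConj A L B) (hA : Dense (A.domain : Set Y))
    (hL : (L : X →ₗ[𝕜] X).IsSymmetric) : B.IsFormalAdjoint B := fun u w ↦
  calc ⟪B u, (w : Y)⟫_𝕜 = ⟪L (A ⟨u, hB.domain_le u.2⟩), A ⟨w, hB.domain_le w.2⟩⟫_𝕜 :=
        hB.inner_apply hA u ⟨w, hB.domain_le w.2⟩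
    _ = ⟪A ⟨u, hB.domain_le u.2⟩, L (A ⟨w, hB.domain_le w.2⟩)⟫_𝕜 := hL _ _
    _ = ⟪(u : Y), B w⟫_𝕜 := by
        rw [← inner_conj_symm, ← hB.inner_apply hA w ⟨u, hB.domain_le u.2⟩, inner_conj_symm]

theorem exists_mem_domain_apply_eq (hB : IsAdjointConj A L B) (hA : Dense (A.domain : Set Y))
    (y : A.domain) {w : Y} (hw : ∀ z : A.domain, ⟪w, (z : Y)⟫_𝕜 = ⟪L (A y), A z⟫_𝕜) :
    ∃ hy : (y : Y) ∈ B.domain, B ⟨y, hy⟩ = w := by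
  have hLy : L (A y) ∈ A.adjoint.domain := mem_adjoint_domain_of_exists _ ⟨w, hw⟩
  refine ⟨(hB.mem_domain_iff y).2 ⟨y.2, hLy⟩, ?_⟩
  rw [hB.apply_eq _ y.2 hLy]
  exact adjoint_apply_eq hA ⟨_, hLy⟩ hw

end IsAdjointConj

theorem stmt2_general [CompleteSpace X] {A : Y →ₗ.[𝕜] X} (hA : Dense (A.domain : Set Y))
    (hAclosed : A.IsClosed) {L : X →L[𝕜] X} (hL : (L : X →ₗ[𝕜] X).IsSymmetric)
    {P : Submodule 𝕜 X} (hP : P.CoFG) {δ : ℝ} (hδ : 0 < δ)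
    (hpos : ∀ u ∈ P, δ * ‖u‖ ^ 2 ≤ re ⟪L u, u⟫_𝕜)
    {B : Y →ₗ.[𝕜] Y} (hB : IsAdjointConj A L B) : B.adjoint = B := by
  obtain ⟨κ, hκ, c, hcoer⟩ :=
    exists_coercive_add_mul_norm_sq L hA (dense_adjoint_domain hAclosed) hP hδ hpos
  refine adjoint_eq_self_of_surjective_add_smul (c := c) (hB.isFormalAdjoint_self hA hL) fun f ↦ ?_
  obtain ⟨y, hy⟩ := exists_graph_inner_add_mul_inner_eq_of_coercive hAclosed L hκ hcoer f
  obtain ⟨hyB, hBy⟩ := hB.exists_mem_domain_apply_eq hA y (w := f - (c : 𝕜) • (y : Y)) fun z ↦ by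
    rw [inner_sub_left, inner_smul_left, conj_ofReal, ← hy z, add_sub_cancel_right]
  exact ⟨⟨y, hyB⟩, by simp only [hBy, sub_add_cancel]⟩

end AdjointConj

end

/-- Let `A : D(A) ⊆ Y → X` be densely defined and closed with densely defined
adjoint, and let `L : X → X` be bounded self-adjoint admitting a direct sum decomposition
`X = X₋ ⊕ ker L ⊕ X₊` into closed subspaces with `dim X₋ < ∞`, `dim ker L < ∞`, the quadratic
form of `L` negative definite on `X₋` and coercive on `X₊`. Then `B := A* L A`, with domain
`{y ∈ D(A) : L(Ay) ∈ D(A*)}`, is self-adjoint on `Y`. -/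
theorem stmt2
    {X Y : Type*} [NormedAddCommGroup X] [InnerProductSpace ℝ X] [CompleteSpace X]
    [NormedAddCommGroup Y] [InnerProductSpace ℝ Y] [CompleteSpace Y]
    (A : Y →ₗ.[ℝ] X) (hAdense : Dense (A.domain : Set Y))
    (hAclosed : IsClosed (A.graph : Set (Y × X)))
    (hAadjdense : Dense (A.adjoint.domain : Set X))
    (L : X →L[ℝ] X) (hL : IsSelfAdjoint L)
    (Xm Xp : Submodule ℝ X)
    (hXmclosed : IsClosed (Xm : Set X)) (hXpclosed : IsClosed (Xp : Set X))
    (hXmfin : FiniteDimensional ℝ Xm)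
    (hkerfin : FiniteDimensional ℝ (LinearMap.ker (L : X →ₗ[ℝ] X)))
    (hdecomp : DirectSum.IsInternal
      (![Xm, LinearMap.ker (L : X →ₗ[ℝ] X), Xp] : Fin 3 → Submodule ℝ X))
    (hneg : ∀ u ∈ Xm, u ≠ 0 → ⟪L u, u⟫ < 0)
    (δ : ℝ) (hδ : 0 < δ)
    (hpos : ∀ u ∈ Xp, δ * ‖u‖ ^ 2 ≤ ⟪L u, u⟫)
    (B : Y →ₗ.[ℝ] Y)
    (hBdom : ∀ y : Y,
      y ∈ B.domain ↔ ∃ hy : y ∈ A.domain, L (A ⟨y, hy⟩) ∈ A.adjoint.domain)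
    (hBval : ∀ (y : B.domain) (hy : (y : Y) ∈ A.domain)
      (hy2 : L (A ⟨(y : Y), hy⟩) ∈ A.adjoint.domain),
      B y = A.adjoint ⟨L (A ⟨(y : Y), hy⟩), hy2⟩) :
    B.adjoint = B := by
  have hcod : Codisjoint (Xm ⊔ LinearMap.ker (L : X →ₗ[ℝ] X)) Xp := codisjoint_iff.2 <| by
    simpa [iSup_fin_three] using hdecomp.submodule_iSup_eq_top
  have hXpcofg : Xp.CoFG :=
    Submodule.FG.cofg_of_codisjoint hcod (Module.Finite.iff_fg.1 inferInstance)
  exact stmt2_general hAdense hAclosed hL.isSymmetric hXpcofg hδ hpos ⟨hBdom, hBval⟩
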